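/- A (right) Leibniz bracket on a vector space $L$ over a field $K$ is a bilinear map $[-,-] : L \times L \to L$ satisfying $[[x,y],z] = [x,[y,z]] + [[x,z],y]$ for all $x,y,z \in L$. Let $(L,[-,-])$ be a Leibniz algebra over a field $K$, and let $N : L \to L$ be a Nijenhuis operator, that is, a linear map with $[N(x),N(y)] = N\big([N(x),y] + [x,N(y)] - N([x,y])\big)$ for all $x,y \in L$. Define $$[x,y]_N := [N(x),y] + [x,N(y)] - N([x,y])$$ for all $x,y \in L$. Then $[-,-]$ and $[-,-]_N$ are two compatible Leibniz brackets on $L$: both are Leibniz brackets, and, writing $[-,-]_1 = [-,-]$ and $[-,-]_2 = [-,-]_N$, for all $x,y,z \in L$, $$[[x,y]_1,z]_2 + [[x,y]_2,z]_1 = [x,[y,z]_1]_2 + [x,[y,z]_2]_1 + [[x,z]_1,y]_2 + [[x,z]_2,y]_1.$$ -/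

import Mathlib

/-- A bilinear bracket is a (right) Leibniz bracket:
`[[x,y],z] = [x,[y,z]] + [[x,z],y]`. -/
def IsLeibnizBracket {K L : Type*} [Field K] [AddCommGroup L] [Module K L]
    (b : L →ₗ[K] L →ₗ[K] L) : Prop :=
  ∀ x y z : L, b (b x y) z = b x (b y z) + b (b x z) y

/-- Two bilinear brackets are compatible Leibniz brackets: each is a Leibniz bracket and the
mixed Leibniz identity holds. -/
structure AreCompatibleLeibnizBrackets {K L : Type*} [Field K] [AddCommGroup L] [Module K L]
    (b₁ b₂ : L →ₗ[K] L →ₗ[K] L) : Prop where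
  left : IsLeibnizBracket b₁
  right : IsLeibnizBracket b₂
  mixed : ∀ x y z : L,
    b₂ (b₁ x y) z + b₁ (b₂ x y) z =
      b₂ x (b₁ y z) + b₁ x (b₂ y z) + b₂ (b₁ x z) y + b₁ (b₂ x z) y

/-- `N` is a Nijenhuis operator for the bracket `b`. -/
def IsNijenhuisOperator {K L : Type*} [Field K] [AddCommGroup L] [Module K L]
    (b : L →ₗ[K] L →ₗ[K] L) (N : L →ₗ[K] L) : Prop :=
  ∀ x y : L, b (N x) (N y) = N (b (N x) y + b x (N y) - N (b x y))

/-- The deformed bracket `[x,y]_N = [N(x),y] + [x,N(y)] - N([x,y])`, as a bilinear map. -/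
def nijenhuisBracket {K L : Type*} [Field K] [AddCommGroup L] [Module K L]
    (b : L →ₗ[K] L →ₗ[K] L) (N : L →ₗ[K] L) : L →ₗ[K] L →ₗ[K] L :=
  LinearMap.mk₂ K (fun x y => b (N x) y + b x (N y) - N (b x y))
    (fun x x' y => by simp only [map_add, LinearMap.add_apply]; abel)
    (fun c x y => by simp only [map_smul, LinearMap.smul_apply, smul_add, smul_sub])
    (fun x y y' => by simp only [map_add]; abel)
    (fun c x y => by simp only [map_smul, smul_add, smul_sub])

section NijenhuisBracket

variable {K L : Type*} [Field K] [AddCommGroup L] [Module K L]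
  {b : L →ₗ[K] L →ₗ[K] L} {N : L →ₗ[K] L}

theorem nijenhuisBracket_apply (b : L →ₗ[K] L →ₗ[K] L) (N : L →ₗ[K] L) (x y : L) :
    nijenhuisBracket b N x y = b (N x) y + b x (N y) - N (b x y) := rfl

/-- A Nijenhuis operator is a morphism from the deformed bracket to the original one. -/
theorem IsNijenhuisOperator.map_nijenhuisBracket (hN : IsNijenhuisOperator b N) (x y : L) :
    N (nijenhuisBracket b N x y) = b (N x) (N y) := (hN x y).symm

theorem IsLeibnizBracket.mixed_nijenhuisBracket (hb : IsLeibnizBracket b) (N : L →ₗ[K] L)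
    (x y z : L) :
    nijenhuisBracket b N (b x y) z + b (nijenhuisBracket b N x y) z =
      nijenhuisBracket b N x (b y z) + b x (nijenhuisBracket b N y z) +
        nijenhuisBracket b N (b x z) y + b (nijenhuisBracket b N x z) y := by
  simp only [nijenhuisBracket_apply, map_add, map_sub, LinearMap.add_apply, LinearMap.sub_apply,
    hb x y (N z), hb (N x) y z, hb x (N y) z, hb x y z]
  abel

theorem IsNijenhuisOperator.nijenhuisBracket_nijenhuisBracket_left
    (hN : IsNijenhuisOperator b N) (x y z : L) :
    nijenhuisBracket b N (nijenhuisBracket b N x y) z =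
      b (b (N x) (N y)) z + b (b (N x) y) (N z) + b (b x (N y)) (N z) -
        N (nijenhuisBracket b N (b x y) z + b (nijenhuisBracket b N x y) z) := by
  rw [nijenhuisBracket_apply b N (nijenhuisBracket b N x y) z, hN.map_nijenhuisBracket, map_add,
    hN.map_nijenhuisBracket]
  simp only [nijenhuisBracket_apply, map_add, map_sub, LinearMap.add_apply, LinearMap.sub_apply]
  abel

theorem IsNijenhuisOperator.nijenhuisBracket_nijenhuisBracket_right
    (hN : IsNijenhuisOperator b N) (x y z : L) :
    nijenhuisBracket b N x (nijenhuisBracket b N y z) =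
      b x (b (N y) (N z)) + b (N x) (b (N y) z) + b (N x) (b y (N z)) -
        N (nijenhuisBracket b N x (b y z) + b x (nijenhuisBracket b N y z)) := by
  rw [nijenhuisBracket_apply b N x (nijenhuisBracket b N y z), hN.map_nijenhuisBracket, map_add,
    hN.map_nijenhuisBracket]
  simp only [nijenhuisBracket_apply, map_add, map_sub]
  abel

theorem IsLeibnizBracket.nijenhuisBracket (hb : IsLeibnizBracket b)
    (hN : IsNijenhuisOperator b N) : IsLeibnizBracket (nijenhuisBracket b N) := by
  intro x y z
  rw [hN.nijenhuisBracket_nijenhuisBracket_left x y z,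
    hN.nijenhuisBracket_nijenhuisBracket_left x z y,
    hN.nijenhuisBracket_nijenhuisBracket_right x y z, hb.mixed_nijenhuisBracket N x y z,
    hb (N x) (N y) z, hb (N x) y (N z), hb x (N y) (N z)]
  simp only [map_add]
  abel

end NijenhuisBracket

theorem nijenhuis_compatible_leibniz {K L : Type*} [Field K] [AddCommGroup L] [Module K L]
    (b : L →ₗ[K] L →ₗ[K] L) (hb : IsLeibnizBracket b)
    (N : L →ₗ[K] L) (hN : IsNijenhuisOperator b N) :
    AreCompatibleLeibnizBrackets b (nijenhuisBracket b N) :=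
  ⟨hb, hb.nijenhuisBracket hN, hb.mixed_nijenhuisBracket N⟩
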